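/- Let f be a smooth nonnegative function on ℝⁿ × (0,1] satisfying the heat subsolution inequality ∂ₜ f ≤ Δ f pointwise, and suppose f(·,t) → 0 in L²_loc(ℝⁿ) as t → 0⁺. Suppose there exist a constant a > 0 and a positive nondecreasing function L : (0,∞) → (0,∞) with ∫₁^∞ r / L(r) dr = ∞ such that for every r > 0, ∫₀¹ tᵃ ∫_{B(0,r)} f(x,t)² dx dt ≤ e^{L(r)}. Then f ≡ 0 on ℝⁿ × (0,1]. -/

import Mathlib

open MeasureTheory Filter Set Metric

/-- The Euclidean Laplacian of `g : ℝⁿ → ℝ`, as the sum of second partial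
derivatives along the standard coordinate directions. -/
noncomputable def heatLap {n : ℕ} (g : EuclideanSpace ℝ (Fin n) → ℝ)
    (x : EuclideanSpace ℝ (Fin n)) : ℝ :=
  ∑ i : Fin n, fderiv ℝ (fun y => fderiv ℝ g y (EuclideanSpace.single i (1 : ℝ))) x
    (EuclideanSpace.single i (1 : ℝ))

/-!
Along a subsolution `f`, the weighted energy `∫ f² φ² e^ξ` grows at a rate of at most
`∫ f² (4 ‖∇φ‖² + φ² (‖∇ξ‖² + ∂ₜξ)) e^ξ`. Take for `φ` a high power of a cutoff between the radii `R`
and `2R`, and `ξ = -h / (s - t) - 2 √t`, where `‖∇h‖² ≤ h` and `h` is of order `R²` on the support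
of `∇φ`. Then `‖∇ξ‖² + ∂ₜξ ≤ -1 / √t`, and by Young's inequality this damping absorbs the cutoff
error up to a multiple of `√t ^ m`, hence of `t ^ a`; the growth hypothesis bounds what is left by
`e^(L (2R) - R² / (64 (s - t)))`. So over a time step of length `R² / (128 L (2R))` the energy in
the ball of radius `R` is bounded by the earlier energy in the ball of radius `2R`,
up to `O(1 / R)`.

Now go back in time, doubling the radius `R = 2 ^ j` at each step. Since `∫ r / L r dr` diverges, so
does the sum of the time steps, and the initial time, where the energy vanishes, is reached after
finitely many doublings. The errors form a geometric series, so the energy in the ball of radius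
`2 ^ j` is `O(2 ^ -j)`; as it also increases with `j`, it is zero.
-/

/-! ### Gradient and Laplacian -/

section
open scoped Gradient InnerProductSpace Laplacian

theorem hasDerivAt_posPart_pow {m : ℕ} (hm : m ≠ 0) (y : ℝ) :
    HasDerivAt (fun y : ℝ => y⁺ ^ (m + 1)) ((m + 1) * y⁺ ^ m) y := by
  refine hasDerivAt_of_hasDerivAt_of_ne' (x := 0) (g := fun y : ℝ => (m + 1) * y⁺ ^ m)
    (fun y hy => ?_) (by fun_prop) (by fun_prop) y
  rcases hy.lt_or_gt with hneg | hpos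
  · have heq : (fun y : ℝ => y⁺ ^ (m + 1)) =ᶠ[nhds y] fun _ => 0 := by
      filter_upwards [Iio_mem_nhds hneg] with z hz
      simp [posPart_eq_zero.2 (mem_Iio.1 hz).le]
    simpa [posPart_eq_zero.2 hneg.le, hm] using (hasDerivAt_const y 0).congr_of_eventuallyEq heq
  · have heq : (fun y : ℝ => y⁺ ^ (m + 1)) =ᶠ[nhds y] fun y => y ^ (m + 1) := by
      filter_upwards [Ioi_mem_nhds hpos] with z hz
      rw [posPart_eq_self.2 (mem_Ioi.1 hz).le]
    simpa [posPart_eq_self.2 hpos.le] using (hasDerivAt_pow (m + 1) y).congr_of_eventuallyEq heq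

theorem contDiff_posPart_pow {m : ℕ} (hm : m ≠ 0) :
    ContDiff ℝ 1 fun y : ℝ => y⁺ ^ (m + 1) := by
  have hderiv := hasDerivAt_posPart_pow hm
  refine contDiff_one_iff_deriv.2 ⟨fun y => (hderiv y).differentiableAt, ?_⟩
  rw [funext fun y => (hderiv y).deriv]
  fun_prop

variable {E : Type*} [NormedAddCommGroup E] [InnerProductSpace ℝ E]

section
variable [CompleteSpace E]

theorem norm_gradient_sq_comp_norm_sq {g : ℝ → ℝ} {g' : ℝ} {x : E}
    (hg : HasDerivAt g g' (‖x‖ ^ 2)) :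
    ‖∇ (fun y : E => g (‖y‖ ^ 2)) x‖ ^ 2 = 4 * ‖x‖ ^ 2 * g' ^ 2 := by
  have hgrad : HasGradientAt (fun y : E => g (‖y‖ ^ 2)) ((2 * g') • x) x := by
    rw [hasGradientAt_iff_hasFDerivAt]
    refine (hg.comp_hasFDerivAt x (hasStrictFDerivAt_norm_sq x).hasFDerivAt).congr_fderiv ?_
    ext y
    simp only [two_nsmul, FunLike.coe_add, FunLike.coe_smul, Pi.add_apply, Pi.smul_apply,
      innerSL_apply_apply, InnerProductSpace.toDual_apply_apply, real_inner_smul_left, smul_eq_mul]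
    ring
  rw [hgrad.gradient, norm_smul, mul_pow, Real.norm_eq_abs, sq_abs]
  ring

theorem continuous_gradient {u : E → ℝ} (hu : ContDiff ℝ 1 u) : Continuous (∇ u) :=
  (InnerProductSpace.toDual ℝ E).symm.continuous.comp (hu.continuous_fderiv one_ne_zero)

theorem hasCompactSupport_gradient {u : E → ℝ} (hu : HasCompactSupport u) :
    HasCompactSupport (∇ u) :=
  (hu.fderiv ℝ).comp_left (map_zero _)

theorem neg_two_mul_inner_gradient_sq_mul_exp_le {u φ ξ : E → ℝ} {x : E}
    (hφ : DifferentiableAt ℝ φ x) (hξ : DifferentiableAt ℝ ξ x) (hu : DifferentiableAt ℝ u x) :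
    -2 * ⟪∇ u x, ∇ (fun y => u y * φ y ^ 2 * Real.exp (ξ y)) x⟫_ℝ ≤
      u x ^ 2 * (4 * ‖∇ φ x‖ ^ 2 + φ x ^ 2 * ‖∇ ξ x‖ ^ 2) * Real.exp (ξ x) := by
  have hexpand : ⟪∇ u x, ∇ (fun y => u y * φ y ^ 2 * Real.exp (ξ y)) x⟫_ℝ =
      (φ x ^ 2 * ‖∇ u x‖ ^ 2 + 2 * u x * φ x * ⟪∇ u x, ∇ φ x⟫_ℝ +
        u x * φ x ^ 2 * ⟪∇ u x, ∇ ξ x⟫_ℝ) * Real.exp (ξ x) := by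
    have hprod := ((hu.hasFDerivAt.mul (hφ.hasFDerivAt.pow 2)).mul hξ.hasFDerivAt.exp).fderiv
    simp only [Pi.mul_def] at hprod
    rw [← real_inner_self_eq_norm_sq]
    simp only [inner_gradient_right, conj_trivial, hprod, smul_eq_mul, FunLike.coe_add,
      FunLike.coe_smul, Pi.add_apply, Pi.smul_apply]
    ring
  -- The term `-2 φ² ‖∇u‖²` is split in two halves, each completing one cross term to a square.
  have hsquare : -2 * (φ x ^ 2 * ‖∇ u x‖ ^ 2 + 2 * u x * φ x * ⟪∇ u x, ∇ φ x⟫_ℝ +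
        u x * φ x ^ 2 * ⟪∇ u x, ∇ ξ x⟫_ℝ) ≤
      u x ^ 2 * (4 * ‖∇ φ x‖ ^ 2 + φ x ^ 2 * ‖∇ ξ x‖ ^ 2) := by
    have h₁ := norm_add_sq_real (φ x • ∇ u x) ((2 * u x) • ∇ φ x)
    have h₂ := norm_add_sq_real (φ x • ∇ u x) ((u x * φ x) • ∇ ξ x)
    simp only [inner_smul_left, inner_smul_right, norm_smul, mul_pow, Real.norm_eq_abs, sq_abs,
      conj_trivial] at h₁ h₂
    nlinarith [sq_nonneg ‖φ x • ∇ u x + (2 * u x) • ∇ φ x‖,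
      sq_nonneg ‖φ x • ∇ u x + (u x * φ x) • ∇ ξ x‖]
  rw [hexpand, ← mul_assoc]
  gcongr

end

variable [FiniteDimensional ℝ E]

theorem laplacian_eq_sum_fderiv_fderiv {ι : Type*} [Fintype ι] (b : OrthonormalBasis ι ℝ E)
    {u : E → ℝ} (hu : ContDiff ℝ 2 u) (x : E) :
    Δ u x = ∑ i, fderiv ℝ (fun y => fderiv ℝ u y (b i)) x (b i) := by
  have hfderiv : Differentiable ℝ (fderiv ℝ u) :=
    (hu.fderiv_right (m := 1) (by norm_num)).differentiable one_ne_zero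
  rw [InnerProductSpace.laplacian_eq_iteratedFDeriv_orthonormalBasis u b]
  refine Finset.sum_congr rfl fun i _ => ?_
  simp [iteratedFDeriv_two_apply, fderiv_clm_apply (hfderiv x) (differentiableAt_const _)]

theorem continuous_laplacian {u : E → ℝ} (hu : ContDiff ℝ 2 u) : Continuous (Δ u) := by
  let b := stdOrthonormalBasis ℝ E
  have hpartial (i) : ContDiff ℝ 1 fun y => fderiv ℝ u y (b i) :=
    (hu.fderiv_right (by norm_num)).clm_apply contDiff_const
  rw [funext (laplacian_eq_sum_fderiv_fderiv b hu)]
  exact continuous_finsetSum _ fun i _ =>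
    ((hpartial i).continuous_fderiv one_ne_zero).clm_apply continuous_const

variable [MeasurableSpace E] [BorelSpace E]

theorem integral_laplacian_mul_eq_neg_integral_inner_gradient {u w : E → ℝ}
    (hu : ContDiff ℝ 2 u) (hw : ContDiff ℝ 1 w) (hw_supp : HasCompactSupport w) :
    ∫ x, Δ u x * w x = -∫ x, ⟪∇ u x, ∇ w x⟫_ℝ := by
  let b := stdOrthonormalBasis ℝ E
  have hpartial (i) : ContDiff ℝ 1 fun y => fderiv ℝ u y (b i) :=
    (hu.fderiv_right (by norm_num)).clm_apply contDiff_const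
  have hpartial' (i) : Continuous fun x => fderiv ℝ (fun y => fderiv ℝ u y (b i)) x (b i) :=
    ((hpartial i).continuous_fderiv one_ne_zero).clm_apply continuous_const
  have hw' (i) : Continuous fun x => fderiv ℝ w x (b i) :=
    (hw.continuous_fderiv one_ne_zero).clm_apply continuous_const
  have hint_left (i) : Integrable fun x => fderiv ℝ (fun y => fderiv ℝ u y (b i)) x (b i) * w x :=
    ((hpartial' i).mul hw.continuous).integrable_of_hasCompactSupport hw_supp.mul_left
  have hint_right (i) : Integrable fun x => fderiv ℝ u x (b i) * fderiv ℝ w x (b i) :=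
    ((hpartial i).continuous.mul (hw' i)).integrable_of_hasCompactSupport
      (hw_supp.fderiv_apply ℝ (b i)).mul_left
  have hparts (i) : ∫ x, fderiv ℝ (fun y => fderiv ℝ u y (b i)) x (b i) * w x =
      -∫ x, fderiv ℝ u x (b i) * fderiv ℝ w x (b i) := by
    rw [integral_mul_fderiv_eq_neg_fderiv_mul_of_integrable (hint_left i) (hint_right i)
      (((hpartial i).continuous.mul hw.continuous).integrable_of_hasCompactSupport hw_supp.mul_left)
      (fun x _ => (hpartial i).differentiable one_ne_zero x)
      (fun x _ => hw.differentiable one_ne_zero x), neg_neg]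
  calc ∫ x, Δ u x * w x
      = ∑ i, ∫ x, fderiv ℝ (fun y => fderiv ℝ u y (b i)) x (b i) * w x := by
        rw [← integral_finsetSum _ fun i _ => hint_left i]
        simp_rw [laplacian_eq_sum_fderiv_fderiv b hu, Finset.sum_mul]
    _ = -∫ x, ∑ i, fderiv ℝ u x (b i) * fderiv ℝ w x (b i) := by
        rw [integral_finsetSum _ fun i _ => hint_right i, ← Finset.sum_neg_distrib]
        exact Finset.sum_congr rfl fun i _ => hparts i
    _ = -∫ x, ⟪∇ u x, ∇ w x⟫_ℝ := by
        congr! 3 with x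
        rw [← b.sum_inner_mul_inner]
        simp only [inner_gradient_left, inner_gradient_right, conj_trivial]

theorem integral_two_mul_mul_laplacian_mul_le {u φ ξ : E → ℝ} (hu : ContDiff ℝ 2 u)
    (hφ : ContDiff ℝ 1 φ) (hφ_supp : HasCompactSupport φ) (hξ : ContDiff ℝ 1 ξ) :
    ∫ x, 2 * (u x * Δ u x) * φ x ^ 2 * Real.exp (ξ x) ≤
      ∫ x, u x ^ 2 * (4 * ‖∇ φ x‖ ^ 2 + φ x ^ 2 * ‖∇ ξ x‖ ^ 2) * Real.exp (ξ x) := by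
  have hu₁ : ContDiff ℝ 1 u := hu.of_le one_le_two
  have hw : ContDiff ℝ 1 fun x => u x * φ x ^ 2 * Real.exp (ξ x) := by fun_prop
  have hφ_sq : HasCompactSupport fun x => φ x ^ 2 := hφ_supp.comp_left (g := (· ^ 2)) (by simp)
  have hw_supp : HasCompactSupport fun x => u x * φ x ^ 2 * Real.exp (ξ x) :=
    hφ_sq.mul_left.mul_right
  have hgradu := continuous_gradient hu₁
  have hgradφ := continuous_gradient hφ
  have hgradξ := continuous_gradient hξ
  have hgradw := continuous_gradient hw
  calc ∫ x, 2 * (u x * Δ u x) * φ x ^ 2 * Real.exp (ξ x)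
      = 2 * ∫ x, Δ u x * (u x * φ x ^ 2 * Real.exp (ξ x)) := by
        rw [← integral_const_mul]
        exact integral_congr_ae (.of_forall fun x => by ring)
    _ = ∫ x, -2 * ⟪∇ u x, ∇ (fun y => u y * φ y ^ 2 * Real.exp (ξ y)) x⟫_ℝ := by
        rw [integral_laplacian_mul_eq_neg_integral_inner_gradient hu hw hw_supp,
          integral_const_mul, neg_mul, mul_neg]
    _ ≤ _ := by
        refine integral_mono ?_ ?_ fun x => neg_two_mul_inner_gradient_sq_mul_exp_le
          (hφ.differentiable one_ne_zero x) (hξ.differentiable one_ne_zero x)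
          (hu₁.differentiable one_ne_zero x)
        · refine Continuous.integrable_of_hasCompactSupport (by fun_prop) ?_
          exact (hasCompactSupport_gradient hw_supp).mono fun x hx h => hx (by simp [h])
        · refine Continuous.integrable_of_hasCompactSupport (by fun_prop) ?_
          have hgradφ_sq : HasCompactSupport fun x => 4 * ‖∇ φ x‖ ^ 2 :=
            (hasCompactSupport_gradient hφ_supp).comp_left (g := fun v => 4 * ‖v‖ ^ 2) (by simp)
          exact (hgradφ_sq.add hφ_sq.mul_right).mul_left.mul_right

theorem integral_two_mul_mul_add_sq_mul_le {u v φ ξ η : E → ℝ} (hu : ContDiff ℝ 2 u)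
    (hv : Continuous v) (huv : ∀ x, u x * v x ≤ u x * Δ u x) (hφ : ContDiff ℝ 1 φ)
    (hφ_supp : HasCompactSupport φ) (hξ : ContDiff ℝ 1 ξ) (hη : Continuous η) :
    ∫ x, (2 * (u x * v x) + u x ^ 2 * η x) * φ x ^ 2 * Real.exp (ξ x) ≤
      ∫ x, u x ^ 2 * (4 * ‖∇ φ x‖ ^ 2 + φ x ^ 2 * (‖∇ ξ x‖ ^ 2 + η x)) * Real.exp (ξ x) := by
  have hlap := continuous_laplacian hu
  have hgradφ := continuous_gradient hφ
  have hgradξ := continuous_gradient hξ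
  have hφ_sq : HasCompactSupport fun x => φ x ^ 2 := hφ_supp.comp_left (g := (· ^ 2)) (by simp)
  have hgradφ_sq : HasCompactSupport fun x => 4 * ‖∇ φ x‖ ^ 2 :=
    (hasCompactSupport_gradient hφ_supp).comp_left (g := fun v => 4 * ‖v‖ ^ 2) (by simp)
  have hint_v : Integrable fun x =>
      (2 * (u x * v x) + u x ^ 2 * η x) * φ x ^ 2 * Real.exp (ξ x) :=
    Continuous.integrable_of_hasCompactSupport (by fun_prop) hφ_sq.mul_left.mul_right
  have hint_lap : Integrable fun x => 2 * (u x * Δ u x) * φ x ^ 2 * Real.exp (ξ x) :=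
    Continuous.integrable_of_hasCompactSupport (by fun_prop) hφ_sq.mul_left.mul_right
  have hint_η : Integrable fun x => u x ^ 2 * (φ x ^ 2 * η x) * Real.exp (ξ x) :=
    Continuous.integrable_of_hasCompactSupport (by fun_prop) hφ_sq.mul_right.mul_left.mul_right
  have hint_grad : Integrable fun x =>
      u x ^ 2 * (4 * ‖∇ φ x‖ ^ 2 + φ x ^ 2 * ‖∇ ξ x‖ ^ 2) * Real.exp (ξ x) :=
    Continuous.integrable_of_hasCompactSupport (by fun_prop)
      (hgradφ_sq.add hφ_sq.mul_right).mul_left.mul_right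
  calc ∫ x, (2 * (u x * v x) + u x ^ 2 * η x) * φ x ^ 2 * Real.exp (ξ x)
      ≤ ∫ x, (2 * (u x * Δ u x) * φ x ^ 2 * Real.exp (ξ x) +
          u x ^ 2 * (φ x ^ 2 * η x) * Real.exp (ξ x)) := by
        refine integral_mono hint_v (hint_lap.add hint_η) fun x => ?_
        have hweight : 0 ≤ φ x ^ 2 * Real.exp (ξ x) := by positivity
        linear_combination 2 * mul_le_mul_of_nonneg_right (huv x) hweight
    _ ≤ ∫ x, (u x ^ 2 * (4 * ‖∇ φ x‖ ^ 2 + φ x ^ 2 * ‖∇ ξ x‖ ^ 2) * Real.exp (ξ x) +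
          u x ^ 2 * (φ x ^ 2 * η x) * Real.exp (ξ x)) := by
        rw [integral_add hint_lap hint_η, integral_add hint_grad hint_η]
        exact add_le_add_left (integral_two_mul_mul_laplacian_mul_le hu hφ hφ_supp hξ) _
    _ = _ := integral_congr_ae (.of_forall fun x => by ring)

end

/-! ### The weighted energy inequality -/

section
open scoped Gradient InnerProductSpace Laplacian
open Function

section
variable {E F : Type*} [NormedAddCommGroup E] [NormedSpace ℝ E] [NormedAddCommGroup F]
  [NormedSpace ℝ F] {I : Set ℝ} {g : ℝ → E → F}

theorem hasDerivAt_of_contDiffOn_uncurry (hI : IsOpen I)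
    (hg : ContDiffOn ℝ 1 (uncurry g) (I ×ˢ univ)) {t : ℝ} (ht : t ∈ I) (x : E) :
    HasDerivAt (fun s => g s x) (fderiv ℝ (uncurry g) (t, x) (1, 0)) t := by
  have hdiff : DifferentiableAt ℝ (uncurry g) (t, x) :=
    (hg.contDiffAt ((hI.prod isOpen_univ).mem_nhds ⟨ht, trivial⟩)).differentiableAt one_ne_zero
  exact hdiff.hasFDerivAt.comp_hasDerivAt t ((hasDerivAt_id t).prodMk (hasDerivAt_const t x))

theorem continuousOn_deriv_of_contDiffOn_uncurry (hI : IsOpen I)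
    (hg : ContDiffOn ℝ 1 (uncurry g) (I ×ˢ univ)) :
    ContinuousOn (fun p : ℝ × E => deriv (fun s => g s p.2) p.1) (I ×ˢ univ) :=
  ((hg.continuousOn_fderiv_of_isOpen (hI.prod isOpen_univ) le_rfl).clm_apply
    continuousOn_const).congr fun p hp => (hasDerivAt_of_contDiffOn_uncurry hI hg hp.1 p.2).deriv

variable [MeasurableSpace E] [OpensMeasurableSpace E] [SecondCountableTopologyEither E F]
  {μ : Measure E} [IsFiniteMeasureOnCompacts μ]

theorem hasDerivAt_integral_of_contDiffOn_uncurry (hI : IsOpen I)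
    (hg : ContDiffOn ℝ 1 (uncurry g) (I ×ˢ univ)) {K : Set E} (hK : IsCompact K)
    (hgK : ∀ s, ∀ x ∉ K, g s x = 0) {t : ℝ} (ht : t ∈ I) :
    HasDerivAt (fun s => ∫ x, g s x ∂μ) (∫ x, deriv (fun s => g s x) t ∂μ) t := by
  have hderiv_cont := continuousOn_deriv_of_contDiffOn_uncurry hI hg
  obtain ⟨ε, hε, hεI⟩ := nhds_basis_closedBall.mem_iff.1 (hI.mem_nhds ht)
  obtain ⟨C, hC⟩ := ((isCompact_closedBall t ε).prod hK).exists_bound_of_continuousOn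
    (hderiv_cont.mono (prod_mono hεI (subset_univ K)))
  have hslice (s) (hs : s ∈ I) : Continuous (g s) :=
    continuousOn_univ.1 (hg.continuousOn.uncurry_left s hs)
  have hslice_deriv : Continuous fun x => deriv (fun s => g s x) t :=
    hderiv_cont.comp_continuous (Continuous.prodMk_right t) fun _ => ⟨ht, trivial⟩
  refine (hasDerivAt_integral_of_dominated_loc_of_deriv_le (bound := K.indicator fun _ => C)
    (F' := fun s x => deriv (fun s => g s x) s)
    (closedBall_mem_nhds t hε) ?_ ?_ hslice_deriv.aestronglyMeasurable ?_ ?_ ?_).2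
  · filter_upwards [hI.mem_nhds ht] with s hs using (hslice s hs).aestronglyMeasurable
  · exact (hslice t ht).integrable_of_hasCompactSupport (.intro hK (hgK t))
  · refine .of_forall fun x s hs => ?_
    by_cases hx : x ∈ K
    · simpa only [indicator_of_mem hx] using hC (s, x) ⟨hs, hx⟩
    · simp [hx, hgK _ x hx]
  · exact (integrable_indicator_iff hK.measurableSet).2 (integrableOn_const hK.measure_lt_top.ne)
  · refine .of_forall fun x s hs => ?_
    exact (hasDerivAt_of_contDiffOn_uncurry hI hg (hεI hs) x).differentiableAt.hasDerivAt

end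

variable {E : Type*} [NormedAddCommGroup E] [InnerProductSpace ℝ E]

section
variable [CompleteSpace E]

/-- The factor controlling the growth of the weighted energy: for a subsolution `f`, the time
derivative of `∫ f² φ² e^ξ` is at most `∫ f² (weightDefect φ ξ t) e^ξ`. -/
noncomputable def weightDefect (φ : E → ℝ) (ξ : ℝ → E → ℝ) (t : ℝ) (x : E) : ℝ :=
  4 * ‖∇ φ x‖ ^ 2 + φ x ^ 2 * (‖∇ (ξ t) x‖ ^ 2 + deriv (fun s => ξ s x) t)

theorem continuous_weightDefect {φ : E → ℝ} (hφ : ContDiff ℝ 1 φ) {I : Set ℝ} (hI : IsOpen I)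
    {ξ : ℝ → E → ℝ} (hξ : ContDiffOn ℝ 1 (uncurry ξ) (I ×ˢ univ)) {t : ℝ} (ht : t ∈ I) :
    Continuous (weightDefect φ ξ t) := by
  have hgradφ := continuous_gradient hφ
  have hgradξ := continuous_gradient <|
    hξ.comp_contDiff (contDiff_prodMk_right t) fun _ => ⟨ht, trivial⟩
  have hderivξ := (continuousOn_deriv_of_contDiffOn_uncurry hI hξ).comp_continuous
    (Continuous.prodMk_right t) fun _ => ⟨ht, trivial⟩
  exact (continuous_const.mul (hgradφ.norm.pow 2)).add
    ((hφ.continuous.pow 2).mul ((hgradξ.norm.pow 2).add hderivξ))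

end

variable [FiniteDimensional ℝ E]

/-- `|f|` is a (weak) subsolution of the heat equation on `(0, T] × E`, in the pointwise form
`f ∂ₜf ≤ f Δf`. Nonnegative subsolutions and solutions of either sign both qualify. -/
structure IsAbsHeatSubsolution (f : ℝ → E → ℝ) (T : ℝ) : Prop where
  continuousOn : ContinuousOn (uncurry f) (Ioc 0 T ×ˢ univ)
  contDiffOn : ContDiffOn ℝ 2 (uncurry f) (Ioo 0 T ×ˢ univ)
  mul_deriv_le : ∀ t ∈ Ioo 0 T, ∀ x, f t x * deriv (fun s => f s x) t ≤ f t x * Δ (f t) x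

variable [MeasurableSpace E] [BorelSpace E] {f : ℝ → E → ℝ} {T : ℝ}

theorem integral_deriv_weighted_sq_le (hf : IsAbsHeatSubsolution f T) {φ : E → ℝ}
    (hφ : ContDiff ℝ 1 φ) (hφ_supp : HasCompactSupport φ) {I : Set ℝ} (hI : IsOpen I)
    {ξ : ℝ → E → ℝ} (hξ : ContDiffOn ℝ 1 (uncurry ξ) (I ×ˢ univ)) {t : ℝ} (htT : t ∈ Ioo 0 T)
    (htI : t ∈ I) :
    ∫ x, deriv (fun s => f s x ^ 2 * φ x ^ 2 * Real.exp (ξ s x)) t ≤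
      ∫ x, f t x ^ 2 * weightDefect φ ξ t x * Real.exp (ξ t x) := by
  have hf₁ : ContDiffOn ℝ 1 (uncurry f) (Ioo 0 T ×ˢ univ) := hf.contDiffOn.of_le one_le_two
  have hprod (x : E) : deriv (fun s => f s x ^ 2 * φ x ^ 2 * Real.exp (ξ s x)) t =
      (2 * (f t x * deriv (fun s => f s x) t) + f t x ^ 2 * deriv (fun s => ξ s x) t) *
        φ x ^ 2 * Real.exp (ξ t x) := by
    have hf' := (hasDerivAt_of_contDiffOn_uncurry isOpen_Ioo hf₁ htT x).differentiableAt.hasDerivAt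
    have hξ' := (hasDerivAt_of_contDiffOn_uncurry hI hξ htI x).differentiableAt.hasDerivAt
    rw [(((hf'.fun_pow 2).mul_const (φ x ^ 2)).fun_mul hξ'.exp).deriv]
    ring
  simp_rw [hprod]
  exact integral_two_mul_mul_add_sq_mul_le
    (hf.contDiffOn.comp_contDiff (contDiff_prodMk_right t) fun _ => ⟨htT, trivial⟩)
    ((continuousOn_deriv_of_contDiffOn_uncurry isOpen_Ioo hf₁).comp_continuous
      (Continuous.prodMk_right t) fun _ => ⟨htT, trivial⟩)
    (hf.mul_deriv_le t htT) hφ hφ_supp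
    (hξ.comp_contDiff (contDiff_prodMk_right t) fun _ => ⟨htI, trivial⟩)
    ((continuousOn_deriv_of_contDiffOn_uncurry hI hξ).comp_continuous
      (Continuous.prodMk_right t) fun _ => ⟨htI, trivial⟩)

theorem weighted_energy_le (hf : IsAbsHeatSubsolution f T) {φ : E → ℝ}
    (hφ : ContDiff ℝ 1 φ) (hφ_supp : HasCompactSupport φ) {I : Set ℝ} (hI : IsOpen I)
    {ξ : ℝ → E → ℝ} (hξ : ContDiffOn ℝ 1 (uncurry ξ) (I ×ˢ univ)) {t₀ t₁ : ℝ} (ht₀ : 0 < t₀)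
    (ht : t₀ ≤ t₁) (ht₁ : t₁ ≤ T) (htI : Icc t₀ t₁ ⊆ I) {B : ℝ → ℝ}
    (hB_int : IntegrableOn B (Icc t₀ t₁))
    (hB : ∀ t ∈ Ioo t₀ t₁, ∫ x, f t x ^ 2 * weightDefect φ ξ t x * Real.exp (ξ t x) ≤ B t) :
    ∫ x, f t₁ x ^ 2 * φ x ^ 2 * Real.exp (ξ t₁ x) ≤
      (∫ x, f t₀ x ^ 2 * φ x ^ 2 * Real.exp (ξ t₀ x)) + ∫ t in t₀..t₁, B t := by
  set g : ℝ → E → ℝ := fun t x => f t x ^ 2 * φ x ^ 2 * Real.exp (ξ t x)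
  have hIcc : Icc t₀ t₁ ⊆ Ioc 0 T := fun t ht => ⟨ht₀.trans_le ht.1, ht.2.trans ht₁⟩
  have hIoo : Ioo t₀ t₁ ⊆ Ioo 0 T := Ioo_subset_Ioo ht₀.le ht₁
  have hgK : ∀ s, ∀ x ∉ tsupport φ, g s x = 0 := fun s x hx => by
    simp [g, image_eq_zero_of_notMem_tsupport hx]
  have hg_cont : ContinuousOn (uncurry g) (Icc t₀ t₁ ×ˢ univ) := by
    have hf' := hf.continuousOn.mono (prod_mono_left hIcc)
    have hξ' := hξ.continuousOn.mono (prod_mono_left htI)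
    exact ((hf'.pow 2).mul (hφ.continuous.comp continuous_snd |>.continuousOn.pow 2)).mul hξ'.rexp
  have hg_diff : ContDiffOn ℝ 1 (uncurry g) (Ioo t₀ t₁ ×ˢ univ) := by
    have hf' := (hf.contDiffOn.of_le one_le_two).mono (prod_mono_left hIoo)
    have hξ' := hξ.mono (prod_mono_left (Ioo_subset_Icc_self.trans htI))
    exact ((hf'.pow 2).mul ((hφ.comp contDiff_snd).contDiffOn.pow 2)).mul hξ'.exp
  have hg_deriv (t) (ht : t ∈ Ioo t₀ t₁) : HasDerivAt (fun t => ∫ x, g t x)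
      (∫ x, deriv (fun s => g s x) t) t :=
    hasDerivAt_integral_of_contDiffOn_uncurry isOpen_Ioo hg_diff hφ_supp hgK ht
  refine sub_le_iff_le_add'.1 <| intervalIntegral.sub_le_integral_of_hasDeriv_right_of_le ht
    (continuousOn_integral_of_compact_support hφ_supp hg_cont fun s x _ hx => hgK s x hx)
    (fun t ht => (hg_deriv t ht).hasDerivWithinAt) hB_int fun t ht => ?_
  exact (integral_deriv_weighted_sq_le hf hφ hφ_supp hI hξ (hIoo ht)
    (htI (Ioo_subset_Icc_self ht))).trans (hB t ht)

end

/-! ### The cutoff and the weight -/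

section
open scoped Gradient

/-- A radial cutoff function, equal to `1` where `‖x‖² ≤ 2 R²` and to `0` where `‖x‖² ≥ 3 R²`.
It is only Lipschitz, but its powers of exponent at least `2` are `C¹`. -/
noncomputable def radialCutoff {E : Type*} [Norm E] (R : ℝ) (x : E) : ℝ :=
  (1 - (‖x‖ ^ 2 / R ^ 2 - 2)⁺ ^ 2)⁺

/-- A `C¹` substitute `h` for a multiple of the squared distance to `ball 0 R`: it vanishes on that
ball and satisfies the eikonal inequality `‖∇h‖² ≤ h` on `closedBall 0 (2 * R)`. -/
noncomputable def eikonalPhase {E : Type*} [Norm E] (R : ℝ) (x : E) : ℝ :=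
  R ^ 2 / 64 * (‖x‖ ^ 2 / R ^ 2 - 1)⁺ ^ 2

variable {E : Type*} [NormedAddCommGroup E] {R : ℝ} {x : E}

theorem radialCutoff_nonneg : 0 ≤ radialCutoff R x := posPart_nonneg _

theorem radialCutoff_eq_one (hR : 0 < R) (hx : ‖x‖ ^ 2 ≤ 2 * R ^ 2) : radialCutoff R x = 1 := by
  have hq : ‖x‖ ^ 2 / R ^ 2 ≤ 2 := (div_le_iff₀ (by positivity)).2 hx
  simp [radialCutoff, posPart_eq_zero.2 (sub_nonpos.2 hq)]

theorem radialCutoff_le_one : radialCutoff R x ≤ 1 :=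
  sup_le (sub_le_self 1 (sq_nonneg _)) zero_le_one

theorem radialCutoff_eq_zero (hR : 0 < R) (hx : 3 * R ^ 2 ≤ ‖x‖ ^ 2) : radialCutoff R x = 0 := by
  have hq : 3 ≤ ‖x‖ ^ 2 / R ^ 2 := (le_div_iff₀ (by positivity)).2 hx
  rw [radialCutoff, posPart_eq_zero, posPart_eq_self.2 (by linarith)]
  nlinarith

theorem hasCompactSupport_radialCutoff_pow [ProperSpace E] (hR : 0 < R) {k : ℕ} (hk : k ≠ 0) :
    HasCompactSupport fun x : E => radialCutoff R x ^ k := by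
  refine .intro (isCompact_closedBall 0 (2 * R)) fun x hx => ?_
  rw [mem_closedBall_zero_iff, not_le] at hx
  rw [radialCutoff_eq_zero hR (by nlinarith), zero_pow hk]

theorem eikonalPhase_nonneg : 0 ≤ eikonalPhase R x := by
  unfold eikonalPhase
  positivity

theorem eikonalPhase_eq_zero (hx : ‖x‖ ≤ R) : eikonalPhase R x = 0 := by
  have hq : ‖x‖ ^ 2 / R ^ 2 ≤ 1 := div_le_one_of_le₀ (by gcongr) (by positivity)
  simp [eikonalPhase, posPart_eq_zero.2 (sub_nonpos.2 hq)]

theorem le_eikonalPhase (hR : 0 < R) (hx : 2 * R ^ 2 ≤ ‖x‖ ^ 2) :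
    R ^ 2 / 64 ≤ eikonalPhase R x := by
  have hq : 2 ≤ ‖x‖ ^ 2 / R ^ 2 := (le_div_iff₀ (by positivity)).2 hx
  have hpos : 1 ≤ (‖x‖ ^ 2 / R ^ 2 - 1)⁺ := by linarith [le_posPart (‖x‖ ^ 2 / R ^ 2 - 1)]
  exact le_mul_of_one_le_right (by positivity) (one_le_pow₀ hpos)

variable [InnerProductSpace ℝ E]

theorem contDiff_radialCutoff_pow {m : ℕ} (hm : m ≠ 0) :
    ContDiff ℝ 1 fun x : E => radialCutoff R x ^ (m + 1) :=
  (contDiff_posPart_pow hm).comp (contDiff_const.sub ((contDiff_posPart_pow one_ne_zero).comp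
    (((contDiff_norm_sq ℝ).div_const _).sub contDiff_const)))

theorem contDiff_eikonalPhase : ContDiff ℝ 1 (eikonalPhase R : E → ℝ) :=
  contDiff_const.mul ((contDiff_posPart_pow one_ne_zero).comp
    (((contDiff_norm_sq ℝ).div_const _).sub contDiff_const))

variable [CompleteSpace E]

theorem norm_gradient_radialCutoff_pow_sq {m : ℕ} (hm : m ≠ 0) (x : E) :
    ‖∇ (fun y : E => radialCutoff R y ^ (m + 1)) x‖ ^ 2 =
      16 * (m + 1) ^ 2 / R ^ 2 * (‖x‖ ^ 2 / R ^ 2) * (‖x‖ ^ 2 / R ^ 2 - 2)⁺ ^ 2 *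
        (radialCutoff R x ^ 2) ^ m := by
  have hshift := (((hasDerivAt_id (‖x‖ ^ 2)).div_const (R ^ 2)).sub_const 2)
  have hprofile := (hasDerivAt_posPart_pow hm _).comp (‖x‖ ^ 2)
    (((hasDerivAt_posPart_pow one_ne_zero _).comp (‖x‖ ^ 2) hshift).const_sub 1)
  refine (norm_gradient_sq_comp_norm_sq hprofile).trans ?_
  simp [radialCutoff]
  ring

theorem norm_gradient_eikonalPhase_sq_le (hR : 0 < R) (hx : ‖x‖ ≤ 2 * R) :
    ‖∇ (eikonalPhase R) x‖ ^ 2 ≤ eikonalPhase R x := by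
  have hprofile := ((hasDerivAt_posPart_pow one_ne_zero _).comp (‖x‖ ^ 2)
    (((hasDerivAt_id (‖x‖ ^ 2)).div_const (R ^ 2)).sub_const 1)).const_mul (R ^ 2 / 64)
  have hx_sq : ‖x‖ ^ 2 ≤ 4 * R ^ 2 := by nlinarith [norm_nonneg x]
  calc ‖∇ (eikonalPhase R) x‖ ^ 2 = ‖x‖ ^ 2 / (4 * R ^ 2) * eikonalPhase R x := by
        refine (norm_gradient_sq_comp_norm_sq hprofile).trans ?_
        simp only [Nat.cast_one, pow_one, one_add_one_eq_two, eikonalPhase, id]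
        field_simp
        ring
    _ ≤ eikonalPhase R x :=
        mul_le_of_le_one_left eikonalPhase_nonneg (div_le_one_of_le₀ hx_sq (by positivity))

theorem norm_gradient_radialCutoff_pow_sq_le {m : ℕ} (hm : m ≠ 0) (hR : 0 < R) (x : E) :
    ‖∇ (fun y : E => radialCutoff R y ^ (m + 1)) x‖ ^ 2 ≤
      48 * (m + 1) ^ 2 / R ^ 2 * (radialCutoff R x ^ 2) ^ m := by
  rw [norm_gradient_radialCutoff_pow_sq hm]
  rcases le_or_gt (3 * R ^ 2) (‖x‖ ^ 2) with hx | hx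
  · simp [radialCutoff_eq_zero hR hx, hm]
  · have hq : ‖x‖ ^ 2 / R ^ 2 ≤ 3 := (div_le_iff₀ (by positivity)).2 hx.le
    have hpos : (‖x‖ ^ 2 / R ^ 2 - 2)⁺ ^ 2 ≤ 1 :=
      pow_le_one₀ (posPart_nonneg _) (sup_le (by linarith) zero_le_one)
    calc 16 * (m + 1) ^ 2 / R ^ 2 * (‖x‖ ^ 2 / R ^ 2) * (‖x‖ ^ 2 / R ^ 2 - 2)⁺ ^ 2 *
          (radialCutoff R x ^ 2) ^ m
        ≤ 16 * (m + 1) ^ 2 / R ^ 2 * 3 * 1 * (radialCutoff R x ^ 2) ^ m := by gcongr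
      _ = 48 * (m + 1) ^ 2 / R ^ 2 * (radialCutoff R x ^ 2) ^ m := by ring

theorem norm_gradient_radialCutoff_pow_sq_eq_zero {m : ℕ} (hm : m ≠ 0) (hR : 0 < R)
    (hx : ‖x‖ ^ 2 ≤ 2 * R ^ 2) : ‖∇ (fun y : E => radialCutoff R y ^ (m + 1)) x‖ ^ 2 = 0 := by
  have hq : ‖x‖ ^ 2 / R ^ 2 ≤ 2 := (div_le_iff₀ (by positivity)).2 hx
  simp [norm_gradient_radialCutoff_pow_sq hm, posPart_eq_zero.2 (sub_nonpos.2 hq)]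

end

theorem mul_pow_le_pow_succ_div_add {p K σ : ℝ} (hp : 0 ≤ p) (hK : 0 ≤ K) (hσ : 0 < σ) (m : ℕ) :
    K * p ^ m ≤ p ^ (m + 1) / σ + K ^ (m + 1) * σ ^ m := by
  rcases le_total p (K * σ) with h | h
  · calc K * p ^ m ≤ K * (K * σ) ^ m := by gcongr
      _ = K ^ (m + 1) * σ ^ m := by ring
      _ ≤ p ^ (m + 1) / σ + K ^ (m + 1) * σ ^ m := le_add_of_nonneg_left (by positivity)
  · calc K * p ^ m ≤ p / σ * p ^ m := by
          gcongr
          exact (le_div_iff₀ hσ).2 h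
      _ = p ^ (m + 1) / σ := by ring
      _ ≤ p ^ (m + 1) / σ + K ^ (m + 1) * σ ^ m := le_add_of_nonneg_right (by positivity)

theorem sqrt_pow_le_rpow_mul_rpow {t T a : ℝ} (ht : 0 < t) (htT : t ≤ T) {m : ℕ}
    (hm : 2 * a ≤ m) : √t ^ m ≤ T ^ (m / 2 - a) * t ^ a := by
  calc √t ^ m = t ^ (m / 2 - a) * t ^ a := by
        rw [← Real.rpow_add ht, sub_add_cancel, Real.sqrt_eq_rpow, ← Real.rpow_natCast,
          ← Real.rpow_mul ht.le, one_div_mul_eq_div]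
    _ ≤ T ^ (m / 2 - a) * t ^ a := by
        gcongr
        linarith

section
open scoped Gradient
open Function

variable {E : Type*} [NormedAddCommGroup E] {R s t : ℝ} {x : E}

/-- The exponent `ξ` of the weight `e^ξ`. The first term is the usual backward Gaussian weight
singular at time `s`; the second one contributes the damping `-1 / √t` to `‖∇ξ‖² + ∂ₜξ`. -/
noncomputable def weightExponent (R s t : ℝ) (x : E) : ℝ :=
  -eikonalPhase R x / (s - t) - 2 * √t

theorem weightExponent_le_neg_two_mul_sqrt (hts : t ≤ s) :
    weightExponent R s t x ≤ -(2 * √t) := by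
  have h : 0 ≤ eikonalPhase R x / (s - t) := div_nonneg eikonalPhase_nonneg (sub_nonneg.2 hts)
  rw [weightExponent, neg_div]
  linarith

theorem weightExponent_le_neg_div (hR : 0 < R) (hts : t < s) (hx : 2 * R ^ 2 ≤ ‖x‖ ^ 2) :
    weightExponent R s t x ≤ -(R ^ 2 / (64 * (s - t))) := by
  have h : R ^ 2 / 64 / (s - t) ≤ eikonalPhase R x / (s - t) :=
    div_le_div_of_nonneg_right (le_eikonalPhase hR hx) (sub_nonneg.2 hts.le)
  rw [weightExponent, neg_div, ← div_div]
  linarith [Real.sqrt_nonneg t]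

theorem weightExponent_eq (hx : ‖x‖ ≤ R) : weightExponent R s t x = -(2 * √t) := by
  simp [weightExponent, eikonalPhase_eq_zero hx]

theorem hasDerivAt_weightExponent (ht : t ∈ Ioo 0 s) :
    HasDerivAt (fun t => weightExponent R s t x)
      (-eikonalPhase R x / (s - t) ^ 2 - 1 / √t) t := by
  have hdiv := ((hasDerivAt_id t).const_sub s).inv (sub_pos.2 ht.2).ne'
  have hsqrt := (Real.hasDerivAt_sqrt ht.1.ne').const_mul 2
  refine ((hdiv.const_mul (-eikonalPhase R x)).sub hsqrt).congr_deriv ?_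
  simp only [id]
  ring

variable [InnerProductSpace ℝ E]

theorem contDiffOn_weightExponent :
    ContDiffOn ℝ 1 (uncurry (weightExponent (E := E) R s)) (Ioo 0 s ×ˢ univ) := by
  have hphase : ContDiff ℝ 1 fun p : ℝ × E => eikonalPhase R p.2 :=
    contDiff_eikonalPhase.comp contDiff_snd
  refine (hphase.neg.contDiffOn.div (contDiff_const.sub contDiff_fst).contDiffOn
    fun p hp => (sub_pos.2 hp.1.2).ne').sub (contDiffOn_const.mul ?_)
  exact contDiff_fst.contDiffOn.sqrt fun p hp => hp.1.1.ne'

theorem continuous_weightExponent : Continuous (weightExponent (E := E) R s t) :=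
  (contDiff_eikonalPhase.continuous.neg.div_const _).sub continuous_const

variable [CompleteSpace E] {m : ℕ}

theorem norm_gradient_weightExponent_sq :
    ‖∇ (weightExponent R s t) x‖ ^ 2 = ‖∇ (eikonalPhase R) x‖ ^ 2 / (s - t) ^ 2 := by
  have hgrad : HasGradientAt (weightExponent R s t) (-(s - t)⁻¹ • ∇ (eikonalPhase R) x) x := by
    have hdiff : DifferentiableAt ℝ (eikonalPhase R) x :=
      contDiff_eikonalPhase.differentiable one_ne_zero x
    rw [hasGradientAt_iff_hasFDerivAt, map_smul, toDual_gradient]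
    refine ((hdiff.hasFDerivAt.const_mul (-(s - t)⁻¹)).sub_const (2 * √t)).congr_of_eventuallyEq
      (.of_forall fun y => ?_)
    rw [weightExponent]
    ring
  rw [hgrad.gradient, norm_smul, mul_pow, norm_neg, norm_inv, Real.norm_eq_abs, inv_pow, sq_abs]
  ring

theorem norm_gradient_weightExponent_sq_add_deriv_le (hR : 0 < R) (ht : t ∈ Ioo 0 s)
    (hx : ‖x‖ ≤ 2 * R) :
    ‖∇ (weightExponent R s t) x‖ ^ 2 + deriv (fun t => weightExponent R s t x) t ≤ -(1 / √t) := by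
  have heikonal := div_le_div_of_nonneg_right (norm_gradient_eikonalPhase_sq_le hR hx)
    (sq_nonneg (s - t))
  rw [norm_gradient_weightExponent_sq, (hasDerivAt_weightExponent ht).deriv, neg_div]
  linarith

theorem weightDefect_le (hR : 0 < R) (ht : t ∈ Ioo 0 s) (hm : m ≠ 0) (hx : ‖x‖ ≤ 2 * R) :
    weightDefect (fun x => radialCutoff R x ^ (m + 1)) (weightExponent R s) t x ≤
      192 * (m + 1) ^ 2 / R ^ 2 * (radialCutoff R x ^ 2) ^ m -
        (radialCutoff R x ^ 2) ^ (m + 1) / √t := by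
  have hgrad := norm_gradient_radialCutoff_pow_sq_le hm hR x
  have hweight := mul_le_mul_of_nonneg_left
    (norm_gradient_weightExponent_sq_add_deriv_le hR ht hx)
    (sq_nonneg (radialCutoff R x ^ (m + 1)))
  unfold weightDefect
  linear_combination 4 * hgrad + hweight

theorem weightDefect_eq_zero (hR : 0 < R) (hm : m ≠ 0) {ξ : ℝ → E → ℝ}
    (hx : 3 * R ^ 2 ≤ ‖x‖ ^ 2) :
    weightDefect (fun x => radialCutoff R x ^ (m + 1)) ξ t x = 0 := by
  simp [weightDefect, norm_gradient_radialCutoff_pow_sq hm, radialCutoff_eq_zero hR hx, hm]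

theorem weightDefect_nonpos (hR : 0 < R) (ht : t ∈ Ioo 0 s) (hm : m ≠ 0)
    (hx : ‖x‖ ^ 2 ≤ 2 * R ^ 2) :
    weightDefect (fun x => radialCutoff R x ^ (m + 1)) (weightExponent R s) t x ≤ 0 := by
  have hweight := norm_gradient_weightExponent_sq_add_deriv_le hR ht (x := x)
    (by nlinarith [norm_nonneg x])
  rw [weightDefect, norm_gradient_radialCutoff_pow_sq_eq_zero hm hR hx, mul_zero, zero_add]
  exact mul_nonpos_of_nonneg_of_nonpos (sq_nonneg _)
    (hweight.trans (neg_nonpos.2 (by positivity)))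

theorem weightDefect_mul_exp_le (hR : 0 < R) (ht : t ∈ Ioo 0 s) (hm : m ≠ 0) (hx : ‖x‖ ≤ 2 * R) :
    weightDefect (fun x => radialCutoff R x ^ (m + 1)) (weightExponent R s) t x *
        Real.exp (weightExponent R s t x) ≤
      (192 * (m + 1) ^ 2 / R ^ 2) ^ (m + 1) * √t ^ m * Real.exp (-(R ^ 2 / (64 * (s - t)))) := by
  rcases le_total (‖x‖ ^ 2) (2 * R ^ 2) with hx_in | hx_out
  · exact (mul_nonpos_of_nonpos_of_nonneg (weightDefect_nonpos hR ht hm hx_in)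
      (Real.exp_nonneg _)).trans (by positivity)
  -- Off the inner ball the damping absorbs all of the cutoff error except a multiple of `√t ^ m`.
  · have hdefect : weightDefect (fun x => radialCutoff R x ^ (m + 1)) (weightExponent R s) t x ≤
        (192 * (m + 1) ^ 2 / R ^ 2) ^ (m + 1) * √t ^ m :=
      (weightDefect_le hR ht hm hx).trans <| sub_le_iff_le_add'.2 <|
        mul_pow_le_pow_succ_div_add (sq_nonneg _) (by positivity) (Real.sqrt_pos.2 ht.1) m
    exact mul_le_mul hdefect (Real.exp_le_exp.2 (weightExponent_le_neg_div hR ht.2 hx_out))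
      (Real.exp_nonneg _) (by positivity)

end

/-! ### Local energies -/

section
open Function

variable {E : Type*} [NormedAddCommGroup E] [MeasurableSpace E] {r : ℝ} {u : E → ℝ}

section
variable {μ : Measure E}

/-- The `L²` energy of `u` in the ball of radius `r` centred at the origin. -/
noncomputable def localEnergy (μ : Measure E) (u : E → ℝ) (r : ℝ) : ℝ :=
  ∫ x in ball 0 r, u x ^ 2 ∂μ

theorem localEnergy_nonneg : 0 ≤ localEnergy μ u r := integral_nonneg fun _ => sq_nonneg _

variable [ProperSpace E] [OpensMeasurableSpace E] [IsFiniteMeasureOnCompacts μ]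

theorem integrableOn_ball_sq (hu : Continuous u) (r : ℝ) :
    IntegrableOn (fun x => u x ^ 2) (ball 0 r) μ :=
  ((hu.pow 2).continuousOn.integrableOn_compact (isCompact_closedBall 0 r)).mono_set
    ball_subset_closedBall

theorem lintegral_ofReal_sq_ball (hu : Continuous u) (r : ℝ) :
    ∫⁻ x in ball 0 r, ENNReal.ofReal (u x ^ 2) ∂μ = ENNReal.ofReal (localEnergy μ u r) :=
  (ofReal_integral_eq_lintegral_ofReal (integrableOn_ball_sq hu r)
    (.of_forall fun _ => sq_nonneg _)).symm

theorem integral_le_mul_localEnergy {g : E → ℝ} {c : ℝ} (hg : Continuous g) (hu : Continuous u)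
    (hg_out : ∀ x, r ≤ ‖x‖ → g x = 0) (hg_le : ∀ x, ‖x‖ < r → g x ≤ c * u x ^ 2) :
    ∫ x, g x ∂μ ≤ c * localEnergy μ u r := by
  have hball : MeasurableSet (ball (0 : E) r) := isOpen_ball.measurableSet
  have hg_int : IntegrableOn g (ball 0 r) μ :=
    (hg.continuousOn.integrableOn_compact (isCompact_closedBall 0 r)).mono_set
      ball_subset_closedBall
  rw [← setIntegral_eq_integral_of_forall_compl_eq_zero (s := ball (0 : E) r) fun x hx =>
    hg_out x (by simpa using hx), localEnergy, ← integral_const_mul]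
  exact setIntegral_mono_on hg_int ((integrableOn_ball_sq hu r).const_mul c) hball fun x hx =>
    hg_le x (mem_ball_zero_iff.1 hx)

theorem eq_zero_of_localEnergy_eq_zero [μ.IsOpenPosMeasure] (hu : Continuous u)
    (h : ∀ r, localEnergy μ u r = 0) (x : E) : u x = 0 := by
  have hae : (fun x => u x ^ 2) =ᵐ[μ.restrict (ball 0 (‖x‖ + 1))] 0 :=
    (integral_eq_zero_iff_of_nonneg (fun _ => sq_nonneg _) (integrableOn_ball_sq hu _)).1 (h _)
  exact pow_eq_zero_iff two_ne_zero |>.1 <| Measure.eqOn_open_of_ae_eq hae isOpen_ball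
    (hu.pow 2).continuousOn continuousOn_const (mem_ball_zero_iff.2 (lt_add_one _))

theorem localEnergy_mono (hu : Continuous u) : Monotone (localEnergy μ u) := fun _ _ hrs =>
  setIntegral_mono_set (integrableOn_ball_sq hu _) (.of_forall fun _ => sq_nonneg _)
    (ball_subset_ball hrs).eventuallyLE

theorem continuousOn_localEnergy {f : ℝ → E → ℝ} {S : Set ℝ} (hS : IsLocallyClosed S)
    (hf : ContinuousOn (uncurry f) (S ×ˢ univ)) (r : ℝ) :
    ContinuousOn (fun t => localEnergy μ (f t) r) S := by
  have := hS.locallyCompactSpace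
  have hf_sq : Continuous (uncurry fun (t : S) x => f t x ^ 2) :=
    (hf.comp_continuous (continuous_subtype_val.prodMap continuous_id)
      fun p => ⟨p.1.2, trivial⟩).pow 2
  have hcont := continuous_parametric_integral_of_continuous (μ := μ.restrict (ball 0 r)) hf_sq
    (isCompact_closedBall 0 r)
  rw [Measure.restrict_restrict measurableSet_closedBall,
    inter_eq_self_of_subset_right ball_subset_closedBall] at hcont
  exact continuousOn_iff_continuous_domRestrict.2 hcont

theorem integrableOn_rpow_mul_localEnergy {f : ℝ → E → ℝ} {a T t₀ t₁ : ℝ}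
    (hf : ContinuousOn (uncurry f) (Ioc 0 T ×ˢ univ)) (ht₀ : 0 < t₀) (ht₁ : t₁ ≤ T) :
    IntegrableOn (fun t => t ^ a * localEnergy μ (f t) r) (Icc t₀ t₁) :=
  ContinuousOn.integrableOn_Icc <|
    (continuousOn_id.rpow_const fun _ ht => .inl (ht₀.trans_le ht.1).ne').mul <|
      (continuousOn_localEnergy isLocallyClosed_Ioc hf r).mono fun _ ht =>
        ⟨ht₀.trans_le ht.1, ht.2.trans ht₁⟩

theorem integral_rpow_mul_localEnergy_le {f : ℝ → E → ℝ} {a T t₀ t₁ M : ℝ}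
    (hf : ContinuousOn (uncurry f) (Ioc 0 T ×ˢ univ)) (ht₀ : 0 < t₀) (ht : t₀ ≤ t₁) (ht₁ : t₁ ≤ T)
    (hM : 0 ≤ M)
    (h : ∫⁻ t in Ioc 0 T, ENNReal.ofReal (t ^ a) *
      ∫⁻ x in ball 0 r, ENNReal.ofReal (f t x ^ 2) ∂μ ≤ ENNReal.ofReal M) :
    ∫ t in t₀..t₁, t ^ a * localEnergy μ (f t) r ≤ M := by
  have hsub : Icc t₀ t₁ ⊆ Ioc 0 T := fun t ht => ⟨ht₀.trans_le ht.1, ht.2.trans ht₁⟩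
  have hint : IntegrableOn (fun t => t ^ a * localEnergy μ (f t) r) (Ioc t₀ t₁) :=
    (integrableOn_rpow_mul_localEnergy hf ht₀ ht₁).mono_set Ioc_subset_Icc_self
  rw [intervalIntegral.integral_of_le ht, ← ENNReal.ofReal_le_ofReal_iff hM,
    ofReal_integral_eq_lintegral_ofReal hint]
  · refine le_trans (le_of_eq ?_)
      ((lintegral_mono_set (Ioc_subset_Icc_self.trans hsub)).trans h)
    refine setLIntegral_congr_fun measurableSet_Ioc fun t ht => ?_
    have htT : t ∈ Ioc 0 T := hsub (Ioc_subset_Icc_self ht)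
    rw [lintegral_ofReal_sq_ball (continuousOn_univ.1 (hf.uncurry_left t htT)),
      ENNReal.ofReal_mul (Real.rpow_nonneg htT.1.le a)]
  · refine (ae_restrict_mem measurableSet_Ioc).mono fun t ht => ?_
    exact mul_nonneg (Real.rpow_nonneg (ht₀.trans ht.1).le a) localEnergy_nonneg

end

section
open scoped Gradient

variable [InnerProductSpace ℝ E] [FiniteDimensional ℝ E] [BorelSpace E] {R s t : ℝ} {m : ℕ}

theorem integral_weighted_sq_le (hu : Continuous u) (hR : 0 < R) (hts : t ≤ s) (hm : m ≠ 0) :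
    ∫ x, u x ^ 2 * (radialCutoff R x ^ (m + 1)) ^ 2 * Real.exp (weightExponent R s t x) ≤
      Real.exp (-(2 * √t)) * localEnergy volume u (2 * R) := by
  have hcutoff : Continuous fun x : E => radialCutoff R x ^ (m + 1) :=
    (contDiff_radialCutoff_pow hm).continuous
  refine integral_le_mul_localEnergy (((hu.pow 2).mul (hcutoff.pow 2)).mul
    continuous_weightExponent.rexp) hu (fun x hx => ?_) fun x _ => ?_
  · simp [radialCutoff_eq_zero hR (x := x) (by nlinarith)]
  · calc u x ^ 2 * (radialCutoff R x ^ (m + 1)) ^ 2 * Real.exp (weightExponent R s t x)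
        ≤ u x ^ 2 * 1 * Real.exp (-(2 * √t)) := by
          gcongr
          · exact pow_le_one₀ (pow_nonneg radialCutoff_nonneg _)
              (pow_le_one₀ radialCutoff_nonneg radialCutoff_le_one)
          · exact weightExponent_le_neg_two_mul_sqrt hts
      _ = Real.exp (-(2 * √t)) * u x ^ 2 := by ring

theorem le_integral_weighted_sq (hu : Continuous u) (hR : 0 < R) (hm : m ≠ 0) :
    Real.exp (-(2 * √t)) * localEnergy volume u R ≤
      ∫ x, u x ^ 2 * (radialCutoff R x ^ (m + 1)) ^ 2 * Real.exp (weightExponent R s t x) := by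
  have hcutoff : Continuous fun x : E => radialCutoff R x ^ (m + 1) :=
    (contDiff_radialCutoff_pow hm).continuous
  have hsupp : HasCompactSupport fun x : E => (radialCutoff R x ^ (m + 1)) ^ 2 := by
    simpa only [← pow_mul] using
      hasCompactSupport_radialCutoff_pow hR (mul_ne_zero m.succ_ne_zero two_ne_zero)
  have hint : Integrable fun x =>
      u x ^ 2 * (radialCutoff R x ^ (m + 1)) ^ 2 * Real.exp (weightExponent R s t x) :=
    (((hu.pow 2).mul (hcutoff.pow 2)).mul
      continuous_weightExponent.rexp).integrable_of_hasCompactSupport hsupp.mul_left.mul_right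
  calc Real.exp (-(2 * √t)) * localEnergy volume u R
      = ∫ x in ball 0 R,
          u x ^ 2 * (radialCutoff R x ^ (m + 1)) ^ 2 * Real.exp (weightExponent R s t x) := by
        rw [localEnergy, ← integral_const_mul]
        refine setIntegral_congr_fun measurableSet_ball fun x hx => ?_
        have hxR : ‖x‖ ≤ R := (mem_ball_zero_iff.1 hx).le
        simp only [radialCutoff_eq_one hR (x := x) (by nlinarith [norm_nonneg x]),
          weightExponent_eq hxR]
        ring
    _ ≤ _ := setIntegral_le_integral hint (.of_forall fun x => by positivity)

theorem integral_sq_mul_weightDefect_mul_exp_le (hu : Continuous u) (hR : 0 < R)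
    (ht : t ∈ Ioo 0 s) (hm : m ≠ 0) :
    ∫ x, u x ^ 2 * weightDefect (fun x => radialCutoff R x ^ (m + 1)) (weightExponent R s) t x *
        Real.exp (weightExponent R s t x) ≤
      (192 * (m + 1) ^ 2 / R ^ 2) ^ (m + 1) * √t ^ m * Real.exp (-(R ^ 2 / (64 * (s - t)))) *
        localEnergy volume u (2 * R) := by
  have hdefect := continuous_weightDefect (contDiff_radialCutoff_pow (E := E) (R := R) hm)
    isOpen_Ioo (contDiffOn_weightExponent (R := R)) ht
  refine integral_le_mul_localEnergy (((hu.pow 2).mul hdefect).mul continuous_weightExponent.rexp)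
    hu (fun x hx => ?_) fun x hx => ?_
  · simp [weightDefect_eq_zero (R := R) (x := x) hR hm (by nlinarith)]
  · rw [mul_assoc, mul_comm]
    exact mul_le_mul_of_nonneg_right (weightDefect_mul_exp_le hR ht hm hx.le) (sq_nonneg _)

theorem integral_sq_mul_weightDefect_mul_exp_le_rpow {a T Λ : ℝ} (hu : Continuous u) (hR : 1 ≤ R)
    (ht : t ∈ Ioo 0 s) (htT : t ≤ T) (hm : m ≠ 0) (hma : 2 * a ≤ m) (hΛ : 0 < Λ)
    (hs : s - t ≤ R ^ 2 / (64 * Λ)) :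
    ∫ x, u x ^ 2 * weightDefect (fun x => radialCutoff R x ^ (m + 1)) (weightExponent R s) t x *
        Real.exp (weightExponent R s t x) ≤
      (192 * (m + 1) ^ 2) ^ (m + 1) * T ^ (m / 2 - a) / R * Real.exp (-Λ) *
        (t ^ a * localEnergy volume u (2 * R)) := by
  have hR₀ : 0 < R := one_pos.trans_le hR
  have ht₀ : 0 < t := ht.1
  have hT : 0 < T := ht₀.trans_le htT
  have hts : 0 < s - t := sub_pos.2 ht.2
  have hexp : Λ ≤ R ^ 2 / (64 * (s - t)) := by
    rw [le_div_comm₀ hΛ (by positivity), mul_comm 64, ← le_div_iff₀ (by norm_num), div_div,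
      mul_comm Λ]
    exact hs
  have hR_pow : R ≤ (R ^ 2) ^ (m + 1) := by
    rw [← pow_mul]
    exact le_self_pow₀ hR (by simp)
  have hconst : (192 * ((m : ℝ) + 1) ^ 2 / R ^ 2) ^ (m + 1) ≤
      (192 * (m + 1) ^ 2) ^ (m + 1) / R := by
    rw [div_pow]
    gcongr
  calc _ ≤ _ := integral_sq_mul_weightDefect_mul_exp_le hu hR₀ ht hm
    _ ≤ (192 * (m + 1) ^ 2) ^ (m + 1) / R * (T ^ (m / 2 - a) * t ^ a) * Real.exp (-Λ) *
        localEnergy volume u (2 * R) := by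
      gcongr
      · exact localEnergy_nonneg
      · exact sqrt_pow_le_rpow_mul_rpow ht₀ htT hma
    _ = _ := by ring

theorem damped_localEnergy_le {f : ℝ → E → ℝ} {a T Λ t₀ t₁ : ℝ} (hf : IsAbsHeatSubsolution f T)
    (hm : m ≠ 0) (hma : 2 * a ≤ m) (hR : 1 ≤ R) (hΛ : 0 < Λ) (ht₀ : 0 < t₀) (ht : t₀ ≤ t₁)
    (ht₁ : t₁ ≤ T) (hδ : t₁ - t₀ ≤ R ^ 2 / (128 * Λ))
    (hgrowth : ∫ t in t₀..t₁, t ^ a * localEnergy volume (f t) (2 * R) ≤ Real.exp Λ) :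
    Real.exp (-(2 * √t₁)) * localEnergy volume (f t₁) R ≤
      Real.exp (-(2 * √t₀)) * localEnergy volume (f t₀) (2 * R) +
        (192 * (m + 1) ^ 2) ^ (m + 1) * T ^ (m / 2 - a) / R := by
  have hR₀ : 0 < R := one_pos.trans_le hR
  have hT : 0 < T := ht₀.trans_le (ht.trans ht₁)
  set C : ℝ := (192 * (m + 1) ^ 2) ^ (m + 1) * T ^ (m / 2 - a)
  set s := t₀ + R ^ 2 / (64 * Λ)
  have hts : t₁ < s := by
    have : R ^ 2 / (128 * Λ) < R ^ 2 / (64 * Λ) := by gcongr; norm_num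
    linarith
  have hslice (t) (ht : t ∈ Ioc 0 T) : Continuous (f t) :=
    continuousOn_univ.1 (hf.continuousOn.uncurry_left t ht)
  have henergy := weighted_energy_le hf (contDiff_radialCutoff_pow hm)
    (hasCompactSupport_radialCutoff_pow hR₀ m.succ_ne_zero) isOpen_Ioo contDiffOn_weightExponent
    ht₀ ht ht₁ (fun _ ht => ⟨ht₀.trans_le ht.1, ht.2.trans_lt hts⟩)
    ((integrableOn_rpow_mul_localEnergy hf.continuousOn ht₀ ht₁).const_mul _) fun t ht =>
      integral_sq_mul_weightDefect_mul_exp_le_rpow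
        (hslice t ⟨ht₀.trans ht.1, ht.2.le.trans ht₁⟩) hR ⟨ht₀.trans ht.1, ht.2.trans hts⟩
        (ht.2.le.trans ht₁) hm hma hΛ (by linarith [ht.1])
  have herror : C / R * Real.exp (-Λ) *
      ∫ t in t₀..t₁, t ^ a * localEnergy volume (f t) (2 * R) ≤ C / R := by
    calc _ ≤ C / R * Real.exp (-Λ) * Real.exp Λ := by gcongr
      _ = C / R := by rw [mul_assoc, ← Real.exp_add, neg_add_cancel, Real.exp_zero, mul_one]
  calc Real.exp (-(2 * √t₁)) * localEnergy volume (f t₁) R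
      ≤ _ := le_integral_weighted_sq (hslice t₁ ⟨ht₀.trans_le ht, ht₁⟩) hR₀ hm
    _ ≤ _ := henergy
    _ ≤ _ := by
      rw [intervalIntegral.integral_const_mul]
      exact add_le_add (integral_weighted_sq_le (hslice t₀ ⟨ht₀, ht.trans ht₁⟩) hR₀
        (ht.trans hts.le) hm) herror

end

end

/-! ### Dyadic iteration -/

theorem le_two_mul_div_two_pow_of_le_sum {F : ℕ → ℝ → ℝ} {δ : ℕ → ℝ} {C T : ℝ} (hC : 0 ≤ C)
    (hδ : ∀ j, 0 ≤ δ j) (hF_init : ∀ j, Tendsto (F j) (nhdsWithin 0 (Ioi 0)) (nhds 0))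
    (hF_step : ∀ j t₀ t₁, 0 < t₀ → t₀ ≤ t₁ → t₁ ≤ T → t₁ - t₀ ≤ δ j →
      F j t₁ ≤ F (j + 1) t₀ + C / 2 ^ j)
    (k j : ℕ) {t : ℝ} (ht : t ∈ Ioc 0 T) (htk : t ≤ ∑ i ∈ Finset.range k, δ (i + j)) :
    F j t ≤ 2 * C / 2 ^ j := by
  induction k generalizing j t with
  | zero => exact absurd htk (not_le.2 (by simpa using ht.1))
  | succ k ih =>
    rcases le_or_gt t (δ j) with htδ | htδ
    · have hlimit : Tendsto (fun t₀ => F (j + 1) t₀ + C / 2 ^ j) (nhdsWithin 0 (Ioi 0))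
          (nhds (C / 2 ^ j)) := by
        simpa using (hF_init (j + 1)).add_const (C / 2 ^ j)
      have hle : F j t ≤ C / 2 ^ j := by
        refine ge_of_tendsto hlimit ?_
        filter_upwards [Ioc_mem_nhdsGT ht.1] with t₀ ht₀
        exact hF_step j t₀ t ht₀.1 ht₀.2 ht.2 (by linarith [ht₀.1])
      exact hle.trans (by gcongr; linarith)
    · have ht₀ : t - δ j ∈ Ioc 0 T := ⟨sub_pos.2 htδ, (sub_le_self t (hδ j)).trans ht.2⟩
      have htk' : t - δ j ≤ ∑ i ∈ Finset.range k, δ (i + (j + 1)) := by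
        rw [Finset.sum_range_succ', zero_add] at htk
        simpa only [sub_le_iff_le_add, add_assoc, add_comm 1 j] using htk
      calc F j t ≤ F (j + 1) (t - δ j) + C / 2 ^ j :=
            hF_step j _ t ht₀.1 (sub_le_self t (hδ j)) ht.2 (sub_sub_cancel t (δ j)).le
        _ ≤ 2 * C / 2 ^ (j + 1) + C / 2 ^ j := by gcongr; exact ih (j + 1) ht₀ htk'
        _ = 2 * C / 2 ^ j := by rw [pow_succ]; ring

theorem le_two_mul_div_two_pow_of_not_summable {F : ℕ → ℝ → ℝ} {δ : ℕ → ℝ} {C T : ℝ} (hC : 0 ≤ C)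
    (hδ : ∀ j, 0 ≤ δ j) (hδ_div : ¬Summable δ)
    (hF_init : ∀ j, Tendsto (F j) (nhdsWithin 0 (Ioi 0)) (nhds 0))
    (hF_step : ∀ j t₀ t₁, 0 < t₀ → t₀ ≤ t₁ → t₁ ≤ T → t₁ - t₀ ≤ δ j →
      F j t₁ ≤ F (j + 1) t₀ + C / 2 ^ j)
    (j : ℕ) {t : ℝ} (ht : t ∈ Ioc 0 T) : F j t ≤ 2 * C / 2 ^ j := by
  rw [← summable_nat_add_iff j, not_summable_iff_tendsto_nat_atTop_of_nonneg fun i => hδ (i + j)]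
    at hδ_div
  obtain ⟨k, hk⟩ := (hδ_div.eventually_ge_atTop t).exists
  exact le_two_mul_div_two_pow_of_le_sum hC hδ hF_init hF_step k j ht hk

theorem Ioi_one_subset_iUnion_Ico_two_pow :
    Ioi (1 : ℝ) ⊆ ⋃ j : ℕ, Ico (2 ^ j) (2 ^ (j + 1)) := fun _ hr =>
  mem_iUnion.2 (exists_nat_pow_near (mem_Ioi.1 hr).le one_lt_two)

theorem not_summable_four_pow_div {L : ℝ → ℝ} (hL_pos : ∀ r > 0, 0 < L r)
    (hL_mono : MonotoneOn L (Ioi 0))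
    (hL_div : ∫⁻ r in Ioi (1 : ℝ), ENNReal.ofReal (r / L r) = ⊤) :
    ¬Summable fun j : ℕ => (4 : ℝ) ^ j / L (2 ^ j) := by
  intro hsum
  have hL_two_pow (j : ℕ) : 0 < L (2 ^ j) := hL_pos _ (by positivity)
  have hshell (j : ℕ) : ∫⁻ r in Ico (2 ^ j : ℝ) (2 ^ (j + 1)), ENNReal.ofReal (r / L r) ≤
      ENNReal.ofReal (2 * (4 ^ j / L (2 ^ j))) := by
    calc _ ≤ ∫⁻ _ in Ico (2 ^ j : ℝ) (2 ^ (j + 1)), ENNReal.ofReal (2 ^ (j + 1) / L (2 ^ j)) := by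
          refine setLIntegral_mono measurable_const fun r hr => ENNReal.ofReal_le_ofReal ?_
          have hj : (0 : ℝ) < 2 ^ j := by positivity
          gcongr
          · exact hL_two_pow j
          · exact hr.2.le
          · exact hL_mono hj (hj.trans_le hr.1) hr.1
      _ = ENNReal.ofReal (2 * (4 ^ j / L (2 ^ j))) := by
          have hnonneg : 0 ≤ 2 ^ (j + 1) / L (2 ^ j) := div_nonneg (by positivity) (hL_two_pow j).le
          rw [setLIntegral_const, Real.volume_Ico, ← ENNReal.ofReal_mul hnonneg, pow_succ,
            show (4 : ℝ) ^ j = 2 ^ j * 2 ^ j by rw [← mul_pow]; norm_num]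
          ring_nf
  refine ENNReal.ofReal_ne_top (top_le_iff.1 ?_) (r := ∑' j, 2 * (4 ^ j / L (2 ^ j)))
  calc ⊤ = ∫⁻ r in Ioi (1 : ℝ), ENNReal.ofReal (r / L r) := hL_div.symm
    _ ≤ ∑' j : ℕ, ∫⁻ r in Ico (2 ^ j : ℝ) (2 ^ (j + 1)), ENNReal.ofReal (r / L r) :=
        (lintegral_mono_set Ioi_one_subset_iUnion_Ico_two_pow).trans (lintegral_iUnion_le _ _)
    _ ≤ ∑' j, ENNReal.ofReal (2 * (4 ^ j / L (2 ^ j))) := ENNReal.tsum_le_tsum hshell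
    _ = _ := (ENNReal.ofReal_tsum_of_nonneg (fun j => mul_nonneg zero_le_two
        (div_nonneg (by positivity) (hL_two_pow j).le)) (hsum.mul_left 2)).symm

theorem not_summable_two_pow_sq_div {L : ℝ → ℝ} (hL_pos : ∀ r > 0, 0 < L r)
    (hL_mono : MonotoneOn L (Ioi 0))
    (hL_div : ∫⁻ r in Ioi (1 : ℝ), ENNReal.ofReal (r / L r) = ⊤) :
    ¬Summable fun j : ℕ => ((2 : ℝ) ^ j) ^ 2 / (128 * L (2 * 2 ^ j)) := by
  intro hsum
  refine not_summable_four_pow_div hL_pos hL_mono hL_div <|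
    (summable_nat_add_iff 1).1 ((hsum.mul_left 512).congr fun j => ?_)
  rw [← pow_succ', ← pow_mul, mul_comm j, pow_mul]
  norm_num
  ring

section
open scoped Laplacian

section
variable {E : Type*} [NormedAddCommGroup E] [InnerProductSpace ℝ E] [FiniteDimensional ℝ E]
  [MeasurableSpace E] [BorelSpace E] {f : ℝ → E → ℝ} {T : ℝ}

theorem tendsto_damped_localEnergy (hf : IsAbsHeatSubsolution f T) (hT : 0 < T) {r : ℝ}
    (hf_init : Tendsto (fun t => ∫⁻ x in ball 0 r, ENNReal.ofReal (f t x ^ 2))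
      (nhdsWithin 0 (Ioi 0)) (nhds 0)) :
    Tendsto (fun t => Real.exp (-(2 * √t)) * localEnergy volume (f t) r)
      (nhdsWithin 0 (Ioi 0)) (nhds 0) := by
  have henergy : Tendsto (fun t => localEnergy volume (f t) r) (nhdsWithin 0 (Ioi 0)) (nhds 0) := by
    refine ((ENNReal.tendsto_toReal ENNReal.zero_ne_top).comp hf_init).congr' ?_
    filter_upwards [Ioc_mem_nhdsGT hT] with t ht
    rw [Function.comp_apply,
      lintegral_ofReal_sq_ball (continuousOn_univ.1 (hf.continuousOn.uncurry_left t ht)),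
      ENNReal.toReal_ofReal localEnergy_nonneg]
  refine squeeze_zero (fun t => mul_nonneg (Real.exp_nonneg _) localEnergy_nonneg) (fun t => ?_)
    henergy
  exact mul_le_of_le_one_left localEnergy_nonneg (Real.exp_le_one_iff.2 (by simp))

theorem eq_zero_of_damped_localEnergy_le {μ : Measure E} [IsFiniteMeasureOnCompacts μ]
    [μ.IsOpenPosMeasure] {u : E → ℝ} (hu : Continuous u) {d C : ℝ} (hd : 0 < d)
    (h : ∀ j : ℕ, d * localEnergy μ u (2 ^ j) ≤ C / 2 ^ j) (x : E) : u x = 0 := by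
  have hlimit : Tendsto (fun j : ℕ => C / (2 : ℝ) ^ j) atTop (nhds 0) :=
    tendsto_const_nhds.div_atTop (tendsto_pow_atTop_atTop_of_one_lt one_lt_two)
  refine eq_zero_of_localEnergy_eq_zero (μ := μ) hu (fun r => ?_) x
  have hle : d * localEnergy μ u r ≤ 0 := by
    refine ge_of_tendsto hlimit ?_
    filter_upwards [(tendsto_pow_atTop_atTop_of_one_lt one_lt_two).eventually_ge_atTop r] with j hj
    exact (mul_le_mul_of_nonneg_left (localEnergy_mono hu hj) hd.le).trans (h j)
  exact le_antisymm (nonpos_of_mul_nonpos_right hle hd) localEnergy_nonneg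

theorem heat_uniqueness_time_weighted_L2_general (hf : IsAbsHeatSubsolution f T)
    (hf_init : ∀ R > (0 : ℝ), Tendsto (fun t => ∫⁻ x in ball 0 R, ENNReal.ofReal (f t x ^ 2))
      (nhdsWithin 0 (Ioi 0)) (nhds 0))
    (a : ℝ) {L : ℝ → ℝ} (hL_pos : ∀ r > (0 : ℝ), 0 < L r) (hL_mono : MonotoneOn L (Ioi 0))
    (hL_div : ∫⁻ r in Ioi (1 : ℝ), ENNReal.ofReal (r / L r) = ⊤)
    (hf_growth : ∀ r > (0 : ℝ),
      ∫⁻ t in Ioc 0 T, ENNReal.ofReal (t ^ a) * ∫⁻ x in ball 0 r, ENNReal.ofReal (f t x ^ 2) ≤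
        ENNReal.ofReal (Real.exp (L r))) :
    ∀ t ∈ Ioc 0 T, ∀ x, f t x = 0 := by
  intro t ht
  have hT : 0 < T := ht.1.trans_le ht.2
  obtain ⟨m, hm⟩ := exists_nat_ge (max 1 (2 * a))
  have hm₀ : m ≠ 0 := Nat.one_le_iff_ne_zero.1 (by exact_mod_cast (le_max_left _ _).trans hm)
  let F (j : ℕ) (t : ℝ) : ℝ := Real.exp (-(2 * √t)) * localEnergy volume (f t) (2 ^ j)
  let C : ℝ := (192 * (m + 1) ^ 2) ^ (m + 1) * T ^ (m / 2 - a)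
  have hstep (j : ℕ) (t₀ t₁ : ℝ) (ht₀ : 0 < t₀) (ht₀₁ : t₀ ≤ t₁) (ht₁ : t₁ ≤ T)
      (hδ : t₁ - t₀ ≤ (2 ^ j) ^ 2 / (128 * L (2 * 2 ^ j))) : F j t₁ ≤ F (j + 1) t₀ + C / 2 ^ j := by
    simp only [F, pow_succ']
    exact damped_localEnergy_le hf hm₀ ((le_max_right _ _).trans hm) (one_le_pow₀ one_le_two)
      (hL_pos _ (by positivity)) ht₀ ht₀₁ ht₁ hδ <|
      integral_rpow_mul_localEnergy_le hf.continuousOn ht₀ ht₀₁ ht₁ (Real.exp_nonneg _)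
        (hf_growth _ (by positivity))
  have hδ_nonneg (j : ℕ) : 0 ≤ ((2 : ℝ) ^ j) ^ 2 / (128 * L (2 * 2 ^ j)) :=
    div_nonneg (by positivity) (mul_nonneg (by norm_num) (hL_pos _ (by positivity)).le)
  have hdecay (j : ℕ) : F j t ≤ 2 * C / 2 ^ j :=
    le_two_mul_div_two_pow_of_not_summable (by positivity) hδ_nonneg
      (not_summable_two_pow_sq_div hL_pos hL_mono hL_div)
      (fun j => tendsto_damped_localEnergy hf hT (hf_init _ (by positivity))) hstep j ht
  exact eq_zero_of_damped_localEnergy_le (continuousOn_univ.1 (hf.continuousOn.uncurry_left t ht))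
    (Real.exp_pos _) hdecay

end

section
variable {n : ℕ}

theorem heatLap_eq_laplacian {u : EuclideanSpace ℝ (Fin n) → ℝ} (hu : ContDiff ℝ 2 u) :
    heatLap u = Δ u := by
  ext x
  simp [heatLap, laplacian_eq_sum_fderiv_fderiv (EuclideanSpace.basisFun (Fin n) ℝ) hu]

theorem IsAbsHeatSubsolution.of_nonneg {f : ℝ → EuclideanSpace ℝ (Fin n) → ℝ} {T : ℝ}
    (hf_smooth : ContDiffOn ℝ 2 (Function.uncurry f) (Ioc 0 T ×ˢ univ))
    (hf_nonneg : ∀ t ∈ Ioo 0 T, ∀ x, 0 ≤ f t x)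
    (hf_subsol : ∀ t ∈ Ioo 0 T, ∀ x, deriv (fun s => f s x) t ≤ heatLap (f t) x) :
    IsAbsHeatSubsolution f T where
  continuousOn := hf_smooth.continuousOn
  contDiffOn := hf_smooth.mono (prod_mono_left Ioo_subset_Ioc_self)
  mul_deriv_le t ht x := by
    have hslice : ContDiff ℝ 2 (f t) :=
      hf_smooth.comp_contDiff (contDiff_prodMk_right t) fun _ => ⟨Ioo_subset_Ioc_self ht, trivial⟩
    rw [← heatLap_eq_laplacian hslice]
    exact mul_le_mul_of_nonneg_left (hf_subsol t ht x) (hf_nonneg t ht x)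

end

end

/-- **Theorem 1 (Euclidean case).** A nonnegative smooth subsolution of the heat
equation on `ℝⁿ × (0,1]` with zero initial data in `L²_loc` and time-weighted
`L²` growth `∫₀¹ tᵃ ∫_{B(0,r)} f² ≤ e^{L(r)}`, where `L` is positive nondecreasing
with `∫₁^∞ r / L(r) dr = ∞`, vanishes identically. -/
theorem heat_uniqueness_time_weighted_L2 {n : ℕ}
    (f : ℝ → EuclideanSpace ℝ (Fin n) → ℝ)
    (hf_smooth : ContDiffOn ℝ (⊤ : ℕ∞)
      (fun p : ℝ × EuclideanSpace ℝ (Fin n) => f p.1 p.2) (Set.Ioc (0:ℝ) 1 ×ˢ Set.univ))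
    (hf_nonneg : ∀ t ∈ Set.Ioc (0:ℝ) 1, ∀ x, 0 ≤ f t x)
    (hf_subsol : ∀ t ∈ Set.Ioc (0:ℝ) 1, ∀ x, deriv (fun s => f s x) t ≤ heatLap (f t) x)
    (hf_init : ∀ R > (0:ℝ),
      Tendsto (fun t => ∫⁻ x in ball (0 : EuclideanSpace ℝ (Fin n)) R,
        ENNReal.ofReal ((f t x) ^ 2)) (nhdsWithin 0 (Set.Ioi 0)) (nhds 0))
    (a : ℝ) (ha : 0 < a)
    (L : ℝ → ℝ)
    (hL_pos : ∀ r > (0:ℝ), 0 < L r)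
    (hL_mono : ∀ r s : ℝ, 0 < r → r ≤ s → L r ≤ L s)
    (hL_div : ∫⁻ r in Set.Ioi (1:ℝ), ENNReal.ofReal (r / L r) = ⊤)
    (hf_growth : ∀ r > (0:ℝ),
      ∫⁻ t in Set.Ioc (0:ℝ) 1, ENNReal.ofReal (t ^ a) *
        ∫⁻ x in ball (0 : EuclideanSpace ℝ (Fin n)) r, ENNReal.ofReal ((f t x) ^ 2)
      ≤ ENNReal.ofReal (Real.exp (L r))) :
    ∀ t ∈ Set.Ioc (0:ℝ) 1, ∀ x, f t x = 0 :=
  heat_uniqueness_time_weighted_L2_general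
    (.of_nonneg (hf_smooth.of_le (ENat.LEInfty.out))
      (fun t ht => hf_nonneg t (Ioo_subset_Ioc_self ht))
      fun t ht => hf_subsol t (Ioo_subset_Ioc_self ht))
    hf_init a hL_pos (fun r hr s _ hrs => hL_mono r s hr hrs) hL_div hf_growth
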